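/- Let ρ₀ satisfy the stated first-order equation with limits a and b at ∓∞, and let h : ℝ → ℝ be continuous and bounded. Then the function v₁*(z) := ρ₀'(z) · ∫₀^z ρ₀'(ς)^{−2} ( ∫_ς^{+∞} h(τ) ρ₀'(τ) dτ ) dς is well defined, twice continuously differentiable, satisfies −(v₁*)''(z) + f_A(ρ₀(z)) v₁*(z) = h(z) for all z ∈ ℝ, and v₁*(0) = 0. -/

import Mathlib

open Filter MeasureTheory

/-- `f_A(ρ) = (ρ² − a²)(ρ² − b²)(2ρ² − a² − b²) + 2((2ρ² − a² − b²)² + 2(ρ² − a²)(ρ² − b²))ρ²`. -/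
noncomputable def fA (a b ρ : ℝ) : ℝ :=
  (ρ ^ 2 - a ^ 2) * (ρ ^ 2 - b ^ 2) * (2 * ρ ^ 2 - a ^ 2 - b ^ 2)
    + 2 * ((2 * ρ ^ 2 - a ^ 2 - b ^ 2) ^ 2
        + 2 * (ρ ^ 2 - a ^ 2) * (ρ ^ 2 - b ^ 2)) * ρ ^ 2

/-- `v₁*(z) = ρ₀'(z) ∫₀^z ρ₀'(ς)⁻² (∫_ς^∞ h(τ)ρ₀'(τ) dτ) dς`. -/
noncomputable def v1star (ρ₀ h : ℝ → ℝ) (z : ℝ) : ℝ :=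
  deriv ρ₀ z *
    ∫ ς in (0:ℝ)..z, ((deriv ρ₀ ς) ^ 2)⁻¹ * ∫ τ in Set.Ioi ς, h τ * deriv ρ₀ τ

/-- For continuous bounded `h`, the function `v₁*` is well defined,
`C²`, solves `−(v₁*)'' + f_A(ρ₀)v₁* = h` on `ℝ`, and satisfies `v₁*(0) = 0`. -/
theorem statement11 (a b : ℝ) (ha : 0 < a) (hab : a < b) (ρ₀ : ℝ → ℝ)
    (hreg : ContDiff ℝ 1 ρ₀)
    (hderiv : ∀ z, deriv ρ₀ z =
      Real.sqrt 2 / 2 * ((ρ₀ z) ^ 2 - a ^ 2) * (b ^ 2 - (ρ₀ z) ^ 2))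
    (hbnd : ∀ z, a < ρ₀ z ∧ ρ₀ z < b)
    (hbot : Tendsto ρ₀ atBot (nhds a))
    (htop : Tendsto ρ₀ atTop (nhds b))
    (h : ℝ → ℝ) (hh : Continuous h) (hhbd : ∃ M, ∀ z, |h z| ≤ M) :
    (∀ ς : ℝ, IntegrableOn (fun τ => h τ * deriv ρ₀ τ) (Set.Ioi ς)) ∧
    (∀ z : ℝ, IntervalIntegrable
      (fun ς => ((deriv ρ₀ ς) ^ 2)⁻¹ * ∫ τ in Set.Ioi ς, h τ * deriv ρ₀ τ)
      volume 0 z) ∧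
    ContDiff ℝ 2 (v1star ρ₀ h) ∧
    (∀ z : ℝ, -(deriv (deriv (v1star ρ₀ h)) z) + fA a b (ρ₀ z) * v1star ρ₀ h z = h z) ∧
    v1star ρ₀ h 0 = 0 := by
  have hfun : deriv ρ₀ = fun z => Real.sqrt 2 / 2 * ((ρ₀ z) ^ 2 - a ^ 2) * (b ^ 2 - (ρ₀ z) ^ 2) :=
    funext hderiv
  have hs : Real.sqrt 2 * Real.sqrt 2 = 2 := Real.mul_self_sqrt (by norm_num)
  have hρ : ∀ z, HasDerivAt ρ₀ (deriv ρ₀ z) z := fun z =>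
    ((hreg.differentiable (by norm_num)) z).hasDerivAt
  have hqc : Continuous (deriv ρ₀) := hreg.continuous_deriv (by norm_num)
  have hpos : ∀ z, 0 < deriv ρ₀ z := by
    intro z
    obtain ⟨h1, h2⟩ := hbnd z
    rw [hderiv]
    have e1 : 0 < (ρ₀ z) ^ 2 - a ^ 2 := by nlinarith
    have e2 : 0 < b ^ 2 - (ρ₀ z) ^ 2 := by nlinarith
    positivity
  obtain ⟨r, hr⟩ : ∃ r : ℝ → ℝ, r = fun z => - (ρ₀ z * (2 * ρ₀ z ^ 2 - a ^ 2 - b ^ 2)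
      * ((ρ₀ z ^ 2 - a ^ 2) * (b ^ 2 - ρ₀ z ^ 2))) := ⟨_, rfl⟩
  have hq : ∀ z, HasDerivAt (deriv ρ₀) (r z) z := by
    intro z
    have h1 := ((((hρ z).pow 2).sub_const (a ^ 2)).const_mul (Real.sqrt 2 / 2)).mul
      (((hρ z).pow 2).const_sub (b ^ 2))
    rw [hfun]
    refine h1.congr_deriv ?_
    rw [hr, hderiv z]
    simp only [Pi.pow_apply]
    linear_combination (-(ρ₀ z * (2 * ρ₀ z ^ 2 - a ^ 2 - b ^ 2)
      * ((ρ₀ z ^ 2 - a ^ 2) * (b ^ 2 - ρ₀ z ^ 2))) / 2) * hs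
  have hrd : ∀ z, HasDerivAt r (fA a b (ρ₀ z) * deriv ρ₀ z) z := by
    intro z
    have h1 := (((hρ z).mul (((((hρ z).pow 2).const_mul 2).sub_const (a ^ 2)).sub_const (b ^ 2))).mul
      ((((hρ z).pow 2).sub_const (a ^ 2)).mul (((hρ z).pow 2).const_sub (b ^ 2)))).neg
    rw [hr]
    refine h1.congr_deriv ?_
    simp only [Pi.pow_apply, Pi.mul_apply, fA]
    push_cast
    ring
  obtain ⟨M, hM⟩ := hhbd
  have hint : ∀ ς : ℝ, IntegrableOn (fun τ => h τ * deriv ρ₀ τ) (Set.Ioi ς) := by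
    intro ς
    have h1 : IntegrableOn (deriv ρ₀) (Set.Ioi ς) :=
      integrableOn_Ioi_deriv_of_nonneg' (fun x _ => hρ x) (fun x _ => (hpos x).le) htop
    exact Integrable.bdd_mul (c := M) h1 hh.aestronglyMeasurable
      (Eventually.of_forall fun x => by simpa using hM x)
  have hhq : Continuous (fun τ => h τ * deriv ρ₀ τ) := hh.mul hqc
  obtain ⟨J, hJ⟩ : ∃ J : ℝ → ℝ, J = fun ς => ∫ τ in Set.Ioi ς, h τ * deriv ρ₀ τ := ⟨_, rfl⟩
  have hJd : ∀ z, HasDerivAt J (-(h z * deriv ρ₀ z)) z := by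
    intro z
    have e : J = fun ς => J 0 - ∫ τ in (0:ℝ)..ς, h τ * deriv ρ₀ τ := by
      funext ς
      have := intervalIntegral.integral_interval_add_Ioi (hint 0) (hint ς)
      simp only [hJ]
      linarith
    rw [e]
    exact (hhq.integral_hasStrictDerivAt 0 z).hasDerivAt.const_sub (J 0)
  have hJc : Continuous J := continuous_iff_continuousAt.2 fun z => (hJd z).continuousAt
  have hKc : Continuous (fun ς => ((deriv ρ₀ ς) ^ 2)⁻¹ * J ς) :=
    ((hqc.pow 2).inv₀ (fun z => (pow_pos (hpos z) 2).ne')).mul hJc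
  obtain ⟨I, hI⟩ : ∃ I : ℝ → ℝ, I = fun z => ∫ ς in (0:ℝ)..z, ((deriv ρ₀ ς) ^ 2)⁻¹ * J ς :=
    ⟨_, rfl⟩
  have hId : ∀ z, HasDerivAt I (((deriv ρ₀ z) ^ 2)⁻¹ * J z) z := by
    intro z
    rw [hI]
    exact (hKc.integral_hasStrictDerivAt 0 z).hasDerivAt
  have hIc : Continuous I := continuous_iff_continuousAt.2 fun z => (hId z).continuousAt
  have hv : v1star ρ₀ h = fun z => deriv ρ₀ z * I z := by
    funext z
    simp only [v1star, hI, hJ]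
  have hvd : ∀ z, HasDerivAt (v1star ρ₀ h) (r z * I z + J z / deriv ρ₀ z) z := by
    intro z
    rw [hv]
    refine ((hq z).mul (hId z)).congr_deriv ?_
    have := (hpos z).ne'
    field_simp
  have hdv : deriv (v1star ρ₀ h) = fun z => r z * I z + J z / deriv ρ₀ z :=
    funext fun z => (hvd z).deriv
  have hvdd : ∀ z, HasDerivAt (deriv (v1star ρ₀ h)) (fA a b (ρ₀ z) * deriv ρ₀ z * I z - h z) z := by
    intro z
    rw [hdv]
    refine (((hrd z).mul (hId z)).add ((hJd z).div (hq z) (hpos z).ne')).congr_deriv ?_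
    have := (hpos z).ne'
    field_simp
    ring
  have hddv : deriv (deriv (v1star ρ₀ h)) = fun z => fA a b (ρ₀ z) * deriv ρ₀ z * I z - h z :=
    funext fun z => (hvdd z).deriv
  have hρc : Continuous ρ₀ := hreg.continuous
  refine ⟨hint, fun z => ?_, ?_, fun z => ?_, ?_⟩
  · have := hKc.intervalIntegrable (μ := volume) 0 z
    simpa only [hJ] using this
  · rw [show (2 : WithTop ℕ∞) = 1 + 1 by norm_num, contDiff_succ_iff_deriv]
    refine ⟨fun z => (hvd z).differentiableAt, by simp, ?_⟩
    rw [contDiff_one_iff_deriv]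
    refine ⟨fun z => (hvdd z).differentiableAt, ?_⟩
    rw [hddv]
    unfold fA
    fun_prop
  · rw [hddv, hv]
    ring
  · simp [v1star]
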